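/- Let Γ = ℤᵈ ⋊_φ ℤᵏ with abelian image φ(ℤᵏ) ⊂ SL(d,ℤ), and let (u,v) ∈ Γ with Id − φ(v) invertible over ℚ. Set L = (Id − φ(v))ℤᵈ and c = |det(Id − φ(v))|, so L has index c in ℤᵈ. Then for every b ∈ ℤᵏ there exists m with 1 ≤ m ≤ c such that (Id − φ(mb))u ∈ L; consequently ((Id − φ(v))⁻¹(Id − φ(mb))u, mb) is an element of the centraliser Z_Γ(u,v). -/

import Mathlib

theorem aux_index {d : ℕ} (A : Matrix (Fin d) (Fin d) ℤ) (hA : A.det ≠ 0) :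
    (LinearMap.range A.mulVecLin).toAddSubgroup.index = A.det.natAbs := by
  have hinj : Function.Injective A.mulVecLin := by
    intro x y hxy
    have h := Matrix.eq_zero_of_mulVec_eq_zero hA (v := x - y) (by
      rw [Matrix.mulVec_sub]
      exact sub_eq_zero.mpr hxy)
    exact sub_eq_zero.mp h
  have h := Submodule.natAbs_det_equiv (LinearMap.range A.mulVecLin)
    (LinearEquiv.ofInjective A.mulVecLin hinj)
  have h2 : (LinearMap.range A.mulVecLin).subtype ∘ₗ
      AddMonoidHom.toIntLinearMap
        ((LinearEquiv.ofInjective A.mulVecLin hinj : _ →+ _)) = Matrix.toLin' A := by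
    ext x
    rfl
  rw [h2, LinearMap.det_toLin'] at h
  rw [h]
  rfl

/-- In `Γ = ℤᵈ ⋊_φ ℤᵏ` with abelian image `φ(ℤᵏ) ⊂ SL(d,ℤ)` and `Id − φ(v)`
invertible over `ℚ`: letting `L = (Id − φ(v))ℤᵈ`, of index `c = |det(Id − φ(v))|`
in `ℤᵈ`, for every `b ∈ ℤᵏ` there is `1 ≤ m ≤ c` with `(Id − φ(mb))u ∈ L`, and then
`((Id − φ(v))⁻¹(Id − φ(mb))u, mb)` is an (integral) element of the centraliser of
`(u,v)`. -/
theorem stmt17 (d k : ℕ) (M : (Fin k → ℤ) → Matrix (Fin d) (Fin d) ℤ)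
    (hhom : ∀ y y' : Fin k → ℤ, M (y + y') = M y * M y')
    (hone : M 0 = 1)
    (hdet : ∀ y, (M y).det = 1)
    (hcomm : ∀ y y', M y * M y' = M y' * M y)
    (u : Fin d → ℤ) (v : Fin k → ℤ)
    (hinv : ((1 : Matrix (Fin d) (Fin d) ℤ) - M v).det ≠ 0) :
    (LinearMap.range (((1 : Matrix (Fin d) (Fin d) ℤ) - M v).mulVecLin)).toAddSubgroup.index =
      ((1 : Matrix (Fin d) (Fin d) ℤ) - M v).det.natAbs ∧
    ∀ b : Fin k → ℤ, ∃ m : ℕ,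
      1 ≤ m ∧ m ≤ ((1 : Matrix (Fin d) (Fin d) ℤ) - M v).det.natAbs ∧
      ((1 : Matrix (Fin d) (Fin d) ℤ) - M (m • b)).mulVec u ∈
        LinearMap.range (((1 : Matrix (Fin d) (Fin d) ℤ) - M v).mulVecLin) ∧
      ∃ x : Fin d → ℤ,
        (fun i => ((x i : ℚ))) =
          (((1 : Matrix (Fin d) (Fin d) ℚ) - (M v).map ((↑) : ℤ → ℚ))⁻¹).mulVec
            ((((1 : Matrix (Fin d) (Fin d) ℚ) - (M (m • b)).map ((↑) : ℤ → ℚ))).mulVec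
              (fun i => ((u i : ℚ)))) ∧
        ((x + (M (m • b)).mulVec u, (m • b) + v) =
          ((u + (M v).mulVec x, v + (m • b)) : (Fin d → ℤ) × (Fin k → ℤ))) := by
  have hidx := aux_index (1 - M v) hinv
  refine ⟨hidx, fun b => ?_⟩
  set A := (1 : Matrix (Fin d) (Fin d) ℤ) - M v with hA
  have hAcomm : ∀ y, A * M y = M y * A := by
    intro y
    rw [hA, sub_mul, mul_sub, one_mul, mul_one, hcomm]
  have key : ∃ m : ℕ, 1 ≤ m ∧ m ≤ A.det.natAbs ∧
      ((1 : Matrix (Fin d) (Fin d) ℤ) - M (m • b)).mulVec u ∈ LinearMap.range A.mulVecLin := by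
    have hpos : (LinearMap.range A.mulVecLin).toAddSubgroup.index ≠ 0 := by
      rw [hidx]; exact Int.natAbs_ne_zero.mpr hinv
    have := AddSubgroup.fintypeOfIndexNeZero hpos
    let f : Fin (A.det.natAbs + 1) → (Fin d → ℤ) ⧸ (LinearMap.range A.mulVecLin).toAddSubgroup :=
      fun i => QuotientAddGroup.mk ((M ((i : ℕ) • b)).mulVec u)
    have hcard : Fintype.card ((Fin d → ℤ) ⧸ (LinearMap.range A.mulVecLin).toAddSubgroup) <
        Fintype.card (Fin (A.det.natAbs + 1)) := by
      rw [Fintype.card_fin, ← Nat.card_eq_fintype_card, ← hidx]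
      exact Nat.lt_succ_self _
    have hlt : ∃ i j : Fin (A.det.natAbs + 1), i < j ∧ f i = f j := by
      obtain ⟨i, j, hne, hij⟩ := Fintype.exists_ne_map_eq_of_card_lt f hcard
      rcases lt_or_gt_of_ne hne with h | h
      · exact ⟨i, j, h, hij⟩
      · exact ⟨j, i, h, hij.symm⟩
    obtain ⟨i, j, hlt, hij⟩ := hlt
    have hlt' : (i : ℕ) < j := hlt
    refine ⟨j - i, by omega, by omega, ?_⟩
    have hmem : -(M ((j : ℕ) • b)).mulVec u + (M ((i : ℕ) • b)).mulVec u ∈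
        (LinearMap.range A.mulVecLin).toAddSubgroup := QuotientAddGroup.eq.mp hij.symm
    obtain ⟨w, hw⟩ : ∃ w, A.mulVec w =
      -(M ((j : ℕ) • b)).mulVec u + (M ((i : ℕ) • b)).mulVec u := hmem
    refine ⟨(M (-((i : ℕ) • b))).mulVec w, ?_⟩
    have hAc := hAcomm (-((i : ℕ) • b))
    have h1 : M (-((i : ℕ) • b)) * M ((i : ℕ) • b) = 1 := by
      rw [← hhom, neg_add_cancel, hone]
    have h2 : M (-((i : ℕ) • b)) * M ((j : ℕ) • b) = M (((j : ℕ) - (i : ℕ)) • b) := by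
      rw [← hhom, sub_nsmul b hlt'.le, add_comm]
    rw [Matrix.mulVecLin_apply, Matrix.mulVec_mulVec, hAc, ← Matrix.mulVec_mulVec, hw,
      Matrix.mulVec_add, Matrix.mulVec_neg, Matrix.mulVec_mulVec, Matrix.mulVec_mulVec, h1, h2,
      Matrix.sub_mulVec]
    abel
  obtain ⟨m, h1, h2, h3⟩ := key
  refine ⟨m, h1, h2, h3, ?_⟩
  obtain ⟨x, hx⟩ := h3
  rw [Matrix.mulVecLin_apply] at hx
  have hcast : ∀ B : Matrix (Fin d) (Fin d) ℤ, ∀ w : Fin d → ℤ,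
      ((1 : Matrix (Fin d) (Fin d) ℚ) - B.map ((↑) : ℤ → ℚ)).mulVec (fun i => (w i : ℚ)) =
        fun i => (((1 - B).mulVec w i : ℤ) : ℚ) := by
    intro B w
    funext i
    rw [Matrix.sub_mulVec, Matrix.sub_mulVec, Matrix.one_mulVec, Matrix.one_mulVec]
    simp [Matrix.mulVec, dotProduct]
  refine ⟨x, ?_, ?_⟩
  · rw [hcast, ← hx, hA, ← hcast, Matrix.mulVec_mulVec, Matrix.nonsing_inv_mul, Matrix.one_mulVec]
    have hm : (1 : Matrix (Fin d) (Fin d) ℚ) - (M v).map ((↑) : ℤ → ℚ) =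
        (Int.castRingHom ℚ).mapMatrix A := by
      rw [hA, map_sub, map_one]; rfl
    rw [hm, ← RingHom.map_det]
    simpa using hinv
  · rw [hA, Matrix.sub_mulVec, Matrix.sub_mulVec, Matrix.one_mulVec, Matrix.one_mulVec] at hx
    refine Prod.ext ?_ (add_comm _ _)
    change x + (M (m • b)).mulVec u = u + (M v).mulVec x
    rw [sub_eq_sub_iff_add_eq_add] at hx
    exact hx
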